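/- arXiv:math/0306232 — 3 statements merged into one kernel-verified Lean document; each statement's English description precedes it below -/
import Mathlib

section
/- Let p ≥ 1 and q ≥ 1 be coprime integers, m an integer, and let r, r' ≥ 0 be integers such that r ≡ r' (mod p) or r ≡ −r' (mod p). Then there is an automorphism of the free group F mapping w_{p,q,r,m} to w_{p,q,r',m}. -/
/-- The free group on two generators; `xx` and `yy` are the generators. -/
def xx : FreeGroup (Fin 2) := FreeGroup.of 0
def yy : FreeGroup (Fin 2) := FreeGroup.of 1

/-- The word `w_{p,q,r,m}` represented by the twisted torus knot
`T(p,q) + r T(m,n)` in the inside handlebody: writing `r = r̄ + α p`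
with `0 ≤ r̄ < p`, it is `∏_{j=0}^{p-1} x^{m e_j} y` where `e_j = α+1`
if `(j q mod p) < r̄` and `e_j = α` otherwise. -/
def w (p q r : ℕ) (m : ℤ) : FreeGroup (Fin 2) :=
  ((List.range p).map (fun j =>
    xx ^ (m * ((if j * q % p < r % p then r / p + 1 else r / p : ℕ) : ℤ)) * yy)).prod

/-- An element of the free group of rank two is primitive iff some automorphism
carries the generator `xx` to it. -/
def IsPrimitive (g : FreeGroup (Fin 2)) : Prop :=
  ∃ φ : FreeGroup (Fin 2) ≃* FreeGroup (Fin 2), φ xx = g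

/-- The one-relator group `G_{a,b} = ⟨x, y | x^a y^b⟩`. -/
abbrev Gg (a b : ℤ) : Type := PresentedGroup ({xx ^ a * yy ^ b} : Set (FreeGroup (Fin 2)))

/-- `g` is `(a,b)` Seifert-fibered if `F / ⟪g⟫ ≅ G_{a,b}`. -/
def IsSF (g : FreeGroup (Fin 2)) (a b : ℤ) : Prop :=
  Nonempty (PresentedGroup ({g} : Set (FreeGroup (Fin 2))) ≃* Gg a b)

/-- The involution of the free group sending `x` to `x⁻¹` and `y` to `x ^ k * y`. -/
def reflection (k : ℤ) : FreeGroup (Fin 2) ≃* FreeGroup (Fin 2) :=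
  have h : (FreeGroup.lift ![xx⁻¹, xx ^ k * yy]).comp (FreeGroup.lift ![xx⁻¹, xx ^ k * yy]) =
      MonoidHom.id (FreeGroup (Fin 2)) := by
    ext i
    fin_cases i <;> simp [xx, yy]
  MonoidHom.toMulEquiv _ _ h h

theorem reflection_xx (k : ℤ) : reflection k xx = xx⁻¹ := by
  simp [reflection, xx]

theorem reflection_yy (k : ℤ) : reflection k yy = xx ^ k * yy := by
  simp [reflection, yy]

/-- The word `∏_{j < p} x ^ (m * f j) * y`. -/
def expWord (p : ℕ) (m : ℤ) (f : ℕ → ℤ) : FreeGroup (Fin 2) :=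
  ((List.range p).map (fun j => xx ^ (m * f j) * yy)).prod

theorem reflection_expWord (p : ℕ) (m k : ℤ) (f : ℕ → ℤ) :
    reflection (m * k) (expWord p m f) = expWord p m (fun j => k - f j) := by
  rw [expWord, expWord, map_list_prod, List.map_map]
  congr 2
  funext j
  simp only [Function.comp_apply, map_mul, map_zpow, reflection_xx, reflection_yy]
  rw [← mul_assoc, inv_zpow', ← zpow_add]
  congr 2
  ring

theorem prod_range_shift_one {G : Type*} [Group G] (g : ℕ → G) (n : ℕ) :
    ((List.range n).map (fun j => g (j + 1))).prod =
      (g 0)⁻¹ * ((List.range n).map g).prod * g n := by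
  rw [mul_assoc, ← List.prod_range_succ, List.prod_range_succ']
  simp

theorem isConj_prod_range_shift {G : Type*} [Group G] (g : ℕ → G) (n : ℕ)
    (hg : ∀ j, g (j + n) = g j) (k : ℕ) :
    IsConj ((List.range n).map g).prod ((List.range n).map (fun j => g (j + k))).prod := by
  induction k with
  | zero => exact IsConj.refl _
  | succ k ih =>
    refine ih.trans (isConj_iff.2 ⟨(g k)⁻¹, ?_⟩)
    have h := prod_range_shift_one (fun j => g (j + k)) n
    simp only [zero_add, add_comm n k, hg, add_right_comm _ 1 k] at h
    rw [inv_inv, ← h]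
    rfl

theorem exists_mulEquiv_expWord_shift (p : ℕ) (m : ℤ) (f : ℕ → ℤ)
    (hf : ∀ j, f (j + p) = f j) (k : ℕ) :
    ∃ φ : FreeGroup (Fin 2) ≃* FreeGroup (Fin 2),
      φ (expWord p m f) = expWord p m (fun j => f (j + k)) := by
  obtain ⟨c, hc⟩ := isConj_iff.1
    (isConj_prod_range_shift (fun j => xx ^ (m * f j) * yy) p (fun j => by simp only [hf]) k)
  exact ⟨MulAut.conj c, hc⟩

/-- The exponent `e_j` of the word `w p q r m`. -/
def exponent (p q r j : ℕ) : ℤ :=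
  ((if j * q % p < r % p then r / p + 1 else r / p : ℕ) : ℤ)

theorem exponent_add_period (p q r j : ℕ) : exponent p q r (j + p) = exponent p q r j := by
  simp [exponent, add_mul]

theorem exponent_sub_of_mod_eq {p r r' : ℕ} (q : ℕ) (h : r % p = r' % p) (j : ℕ) :
    exponent p q r' j = (r' / p : ℕ) - ((r / p : ℕ) - exponent p q r j) := by
  unfold exponent
  rw [h]
  split_ifs <;> push_cast <;> ring

theorem exponent_reflect {p q r r' k : ℕ} (hp : 0 < p) (hk : k * q % p = r % p)
    (h : r % p + r' % p = p) (j : ℕ) :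
    exponent p q r' j = ((r' / p : ℕ) + (r / p : ℕ) + 1) - exponent p q r (j + k) := by
  have hs := Nat.mod_lt (j * q) hp
  have hr := Nat.mod_lt r hp
  have hr' := Nat.mod_lt r' hp
  unfold exponent
  rw [add_mul, Nat.add_mod, hk]
  have hiff : (j * q % p + r % p) % p < r % p ↔ ¬ j * q % p < r' % p := by
    rcases lt_or_ge (j * q % p + r % p) p with hlt | hge
    · rw [Nat.mod_eq_of_lt hlt]
      omega
    · rw [Nat.mod_eq_sub_mod hge, Nat.mod_eq_of_lt (by omega)]
      omega
  simp only [hiff]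
  split_ifs <;> push_cast <;> ring

theorem exists_mul_mod_eq {p q : ℕ} (hpq : Nat.Coprime p q) (r : ℕ) :
    ∃ k, k * q % p = r % p := by
  obtain ⟨k, hk₁, hk₂⟩ := Nat.chineseRemainder hpq r 0
  obtain ⟨l, rfl⟩ := (Nat.modEq_zero_iff_dvd.1 hk₂)
  exact ⟨l, by rw [mul_comm]; exact hk₁⟩

/-- If `r ≡ ±r' (mod p)` then `w_{p,q,r,m}` and `w_{p,q,r',m}` are equivalent,
i.e. some automorphism of the free group maps one to the other. -/
theorem stmt2 (p q : ℕ) (m : ℤ) (r r' : ℕ) (hp : 1 ≤ p) (hq : 1 ≤ q)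
    (hpq : Nat.Coprime p q)
    (hcong : (r : ℤ) ≡ (r' : ℤ) [ZMOD (p : ℤ)] ∨ (r : ℤ) ≡ -(r' : ℤ) [ZMOD (p : ℤ)]) :
    ∃ φ : FreeGroup (Fin 2) ≃* FreeGroup (Fin 2), φ (w p q r m) = w p q r' m := by
  change ∃ φ : FreeGroup (Fin 2) ≃* FreeGroup (Fin 2),
    φ (expWord p m (exponent p q r)) = expWord p m (exponent p q r')
  have hcases : r % p = r' % p ∨ r % p + r' % p = p := by
    rcases hcong with h | h
    · exact Or.inl ((Int.natCast_modEq_iff).1 h)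
    · have hdvd : p ∣ r % p + r' % p := by
        have h' := h.symm.dvd
        rw [sub_neg_eq_add] at h'
        rw [Nat.dvd_iff_mod_eq_zero, ← Nat.add_mod, ← Nat.dvd_iff_mod_eq_zero]
        exact_mod_cast h'
      have hr := Nat.mod_lt r hp
      have hr' := Nat.mod_lt r' hp
      obtain ⟨c, hc⟩ := hdvd
      rcases c with _ | _ | c
      · omega
      · omega
      · nlinarith
  rcases hcases with h | h
  · refine ⟨(reflection (m * (r / p : ℕ))).trans (reflection (m * (r' / p : ℕ))), ?_⟩
    rw [MulEquiv.trans_apply, reflection_expWord, reflection_expWord]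
    congr 1
    funext j
    exact (exponent_sub_of_mod_eq q h j).symm
  · obtain ⟨k, hk⟩ := exists_mul_mod_eq hpq r
    obtain ⟨φ, hφ⟩ := exists_mulEquiv_expWord_shift p m _ (exponent_add_period p q r) k
    refine ⟨φ.trans (reflection (m * ((r' / p : ℕ) + (r / p : ℕ) + 1))), ?_⟩
    rw [MulEquiv.trans_apply, hφ, reflection_expWord]
    congr 1
    funext j
    exact (exponent_reflect hp hk h j).symm
end

section
/- Let p and q be coprime integers with 1 ≤ q < p/2, let s = q̂⁻¹, and let r be an integer with 1 ≤ r ≤ ⌈p/s⌉ and p ≠ rs. Then w_{p,q,r,1} and w_{p,q,p−r,1} are both (r, p − r·s) Seifert-fibered; that is, the quotient of F by the normal closure of either element is isomorphic to G_{r, p−rs} = ⟨x, y | x^r y^{p−rs}⟩. -/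
/-- An automorphism of the free group on two generators given by the images of the generators and
the images of the generators under the inverse. -/
def freeAut (u v u' v' : FreeGroup (Fin 2))
    (hx : FreeGroup.lift ![u', v'] u = xx) (hy : FreeGroup.lift ![u', v'] v = yy)
    (hx' : FreeGroup.lift ![u, v] u' = xx) (hy' : FreeGroup.lift ![u, v] v' = yy) :
    FreeGroup (Fin 2) ≃* FreeGroup (Fin 2) :=
  MonoidHom.toMulEquiv (FreeGroup.lift ![u, v]) (FreeGroup.lift ![u', v'])
    (by ext i; fin_cases i <;> simp [hx, hy] <;> rfl)
    (by ext i; fin_cases i <;> simp [hx', hy'] <;> rfl)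

@[simp] lemma lift_xx {G : Type*} [Group G] (u v : G) : FreeGroup.lift ![u, v] xx = u := by
  simp [xx]

@[simp] lemma lift_yy {G : Type*} [Group G] (u v : G) : FreeGroup.lift ![u, v] yy = v := by
  simp [yy]

lemma exists_aut_mul_pow (n : ℕ) :
    ∃ φ : FreeGroup (Fin 2) ≃* FreeGroup (Fin 2), φ xx = xx * yy ^ n ∧ φ yy = yy :=
  ⟨freeAut (xx * yy ^ n) yy (xx * (yy ^ n)⁻¹) yy (by simp) (by simp) (by simp) (by simp),
    lift_xx (xx * yy ^ n) yy, lift_yy (xx * yy ^ n) yy⟩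

lemma exists_aut_yy_mul :
    ∃ φ : FreeGroup (Fin 2) ≃* FreeGroup (Fin 2), φ xx = yy ∧ φ yy = xx * yy :=
  ⟨freeAut yy (xx * yy) (yy * xx⁻¹) xx (by simp) (by simp) (by simp) (by simp),
    lift_xx yy (xx * yy), lift_yy yy (xx * yy)⟩

lemma isSF_map_aut (φ : FreeGroup (Fin 2) ≃* FreeGroup (Fin 2)) (a b : ℤ) :
    IsSF (φ (xx ^ a * yy ^ b)) a b := by
  refine ⟨(QuotientGroup.congr _ _ φ ?_).symm⟩
  rw [Subgroup.map_normalClosure _ _ φ.surjective]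
  simp

/-- The product of one period of a periodic sequence depends on the starting point only up to
conjugation. -/
lemma exists_conj_prod_shift {G : Type*} [Group G] (f : ℕ → G) (p : ℕ)
    (hf : ∀ j, f (j + p) = f j) (c : ℕ) :
    ∃ g : G, ((List.range p).map f).prod =
      g * ((List.range p).map (fun j => f (j + c))).prod * g⁻¹ := by
  induction c with
  | zero => exact ⟨1, by simp⟩
  | succ c ih =>
    obtain ⟨g, hg⟩ := ih
    refine ⟨g * f c, ?_⟩
    have h1 := List.prod_range_succ (fun j => f (j + c)) p
    have h2 := List.prod_range_succ' (fun j => f (j + c)) p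
    have h3 : f (p + c) = f c := by rw [add_comm, hf]
    rw [h1] at h2
    simp only [h3, zero_add] at h2
    rw [hg, eq_mul_inv_of_mul_eq h2]
    simp only [Nat.succ_eq_add_one, add_right_comm _ 1 c, ← add_assoc]
    group

lemma prod_range_add {G : Type*} [Monoid G] (f : ℕ → G) (m n : ℕ) :
    ((List.range (m + n)).map f).prod =
      ((List.range m).map f).prod * ((List.range n).map (fun j => f (m + j))).prod := by
  rw [List.range_add, List.map_append, List.prod_append, List.map_map]
  rfl

lemma prod_range_const {G : Type*} [Monoid G] (f : ℕ → G) (v : G) (n : ℕ)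
    (h : ∀ j < n, f j = v) : ((List.range n).map f).prod = v ^ n := by
  rw [List.map_congr_left (g := fun _ => v) (fun j hj => h j (List.mem_range.1 hj))]
  simp

lemma prod_range_mul_spaced {G : Type*} [Monoid G] (f : ℕ → G) (u v : G) (s k : ℕ) (hs : 0 < s)
    (h : ∀ j < k * s, f j = if s ∣ j then u else v) :
    ((List.range (k * s)).map f).prod = (u * v ^ (s - 1)) ^ k := by
  induction k with
  | zero => simp
  | succ k ih =>
    rw [add_mul, one_mul, prod_range_add, ih (fun j hj => h j (by nlinarith)), pow_succ]
    congr 1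
    obtain ⟨t, rfl⟩ : ∃ t, s = t + 1 := ⟨s - 1, by omega⟩
    rw [List.prod_range_succ', prod_range_const _ v]
    · rw [h _ (by nlinarith)]
      simp
    · intro j hj
      rw [h _ (by rw [add_mul, one_mul]; simp; omega), if_neg]
      rw [Nat.dvd_add_right (dvd_mul_left _ _)]
      exact Nat.not_dvd_of_pos_of_lt (by omega) (by omega)

/-- A word of length `p` in `u` and `v`, with `u` exactly at the places `0, s, …, (r - 1) s`. -/
lemma prod_range_spaced {G : Type*} [Group G] (f : ℕ → G) (u v : G) (p s r : ℕ) (hs : 0 < s)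
    (hr : 1 ≤ r) (hrp : (r - 1) * s < p)
    (h : ∀ j < p, f j = if s ∣ j ∧ j / s < r then u else v) :
    ((List.range p).map f).prod = (u * v ^ (s - 1)) ^ (r : ℤ) * v ^ ((p : ℤ) - r * s) := by
  obtain ⟨k, rfl⟩ : ∃ k, r = k + 1 := ⟨r - 1, by omega⟩
  rw [Nat.add_sub_cancel] at hrp
  obtain ⟨n, rfl⟩ : ∃ n, p = k * s + (n + 1) := ⟨p - k * s - 1, by omega⟩
  obtain ⟨t, rfl⟩ : ∃ t, s = t + 1 := ⟨s - 1, by omega⟩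
  rw [prod_range_add, prod_range_mul_spaced f u v _ _ hs, List.prod_range_succ',
    prod_range_const _ v]
  · have h0 : f (k * (t + 1) + 0) = u := by
      rw [h _ (by omega), if_pos]
      simp
    have he : ((k * (t + 1) + (n + 1) : ℕ) : ℤ) - (k + 1 : ℕ) * (t + 1 : ℕ) = n - t := by
      push_cast
      ring
    rw [h0, he, zpow_sub, zpow_natCast, zpow_natCast, zpow_natCast, pow_succ,
      Nat.add_sub_cancel, (Commute.pow_pow_self v n t).inv_right.eq]
    simp [mul_assoc]
  · intro j hj
    rw [h _ (by omega), if_neg]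
    rintro ⟨⟨i, hi⟩, hlt⟩
    rw [hi, Nat.mul_div_cancel_left _ hs] at hlt
    nlinarith
  · intro j hj
    rw [h _ (by omega)]
    have : j / (t + 1) < k + 1 := by
      rw [Nat.div_lt_iff_lt_mul hs]
      nlinarith
    simp [this]

/-- If `s q ≡ ±1 (mod p)`, then the `j` with `j q mod p` in an interval of length `r` form,
up to translation, the arithmetic progression `0, s, …, (r - 1) s`. -/
lemma exists_shift_mem_iff (p q s r a : ℕ) (hpq : Nat.Coprime p q) (hs : 0 < s)
    (hsq : (s * q : ℤ) ≡ 1 [ZMOD (p : ℤ)] ∨ (s * q : ℤ) ≡ -1 [ZMOD (p : ℤ)])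
    (hr : 1 ≤ r) (hrp : (r - 1) * s < p) (har : a + r ≤ p) :
    ∃ c : ℕ, ∀ j < p,
      (a ≤ (j + c) * q % p ∧ (j + c) * q % p < a + r) ↔ (s ∣ j ∧ j / s < r) := by
  have hp : 0 < p := by omega
  have hsol (t : ℕ) : ∃ c : ℕ, ((c * q : ℕ) : ℤ) ≡ t [ZMOD p] := by
    obtain ⟨c, -, hc⟩ := Nat.exists_mul_mod_eq_of_coprime t hpq.symm hp.ne'
    exact ⟨c, Int.natCast_modEq_iff.2 (by rwa [mul_comm])⟩
  obtain ⟨e, t, he, hse, ht⟩ : ∃ (e : ℤ) (t : ℕ), e * e = 1 ∧ (s * q : ℤ) ≡ e [ZMOD p] ∧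
      ((e = 1 ∧ t = a) ∨ (e = -1 ∧ t = a + r - 1)) := by
    rcases hsq with h | h
    · exact ⟨1, a, by simp, h, .inl ⟨rfl, rfl⟩⟩
    · exact ⟨-1, a + r - 1, by simp, h, .inr ⟨rfl, rfl⟩⟩
  obtain ⟨c, hc⟩ := hsol t
  refine ⟨c, fun j hj => ?_⟩
  set m := (j + c) * q % p with hm
  have hmp : m < p := Nat.mod_lt _ hp
  have hmod : (m : ℤ) ≡ j * q + t [ZMOD p] := by
    have : (m : ℤ) ≡ ((j + c) * q : ℕ) [ZMOD p] := by
      rw [hm, Int.natCast_mod]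
      exact Int.mod_modEq _ _
    refine this.trans ?_
    push_cast at hc ⊢
    rw [add_mul]
    exact hc.add_left _
  have unique {y z : ℕ} (hy : y < p) (hz : z < p) (h : (y : ℤ) ≡ z [ZMOD p]) : y = z :=
    Nat.ModEq.eq_of_lt_of_lt (Int.natCast_modEq_iff.1 h) hy hz
  constructor
  · rintro ⟨h1, h2⟩
    obtain ⟨i, hi, hit⟩ : ∃ i : ℕ, i < r ∧ (m : ℤ) = t + e * i := by
      rcases ht with ⟨rfl, rfl⟩ | ⟨rfl, rfl⟩
      · exact ⟨m - t, by omega, by omega⟩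
      · exact ⟨a + r - 1 - m, by omega, by omega⟩
    have hij : j = i * s := by
      refine unique hj (lt_of_le_of_lt (Nat.mul_le_mul_right s (by omega)) hrp) ?_
      rw [Int.modEq_iff_dvd] at hmod hse ⊢
      obtain ⟨A, hA⟩ := hmod
      obtain ⟨B, hB⟩ := hse
      refine ⟨-(e * s * A) - e * j * B, ?_⟩
      push_cast
      linear_combination (-e * s) * hA - e * j * hB + (-e * s) * hit + (j - i * s : ℤ) * he
    subst hij
    exact ⟨dvd_mul_left _ _, by rwa [Nat.mul_div_cancel _ hs]⟩
  · rintro ⟨⟨i, rfl⟩, hi⟩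
    rw [Nat.mul_div_cancel_left _ hs] at hi
    have hmt : (m : ℤ) ≡ t + e * i [ZMOD p] := by
      refine hmod.trans ?_
      rw [Int.modEq_iff_dvd] at hse ⊢
      obtain ⟨B, hB⟩ := hse
      refine ⟨i * B, ?_⟩
      push_cast
      linear_combination (i : ℤ) * hB
    rcases ht with ⟨rfl, rfl⟩ | ⟨rfl, rfl⟩
    · have := unique (z := t + i) hmp (by omega) (by simpa using hmt)
      omega
    · have := unique (z := a + r - 1 - i) hmp (by omega) (by
        have : ((a + r - 1 - i : ℕ) : ℤ) = (a + r - 1 : ℕ) + -1 * (i : ℤ) := by omega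
        rwa [this])
      omega

/-- A periodic word whose letters are the images of `xx` and `yy` under an automorphism, with the
image of `xx` placed along an arithmetic progression of difference `s` and length `r`. -/
lemma isSF_prod_range (α : FreeGroup (Fin 2) ≃* FreeGroup (Fin 2)) (f : ℕ → FreeGroup (Fin 2))
    (p s r c : ℕ) (hs : 0 < s) (hr : 1 ≤ r) (hrp : (r - 1) * s < p)
    (hf : ∀ j, f (j + p) = f j)
    (h : ∀ j < p, f (j + c) = if s ∣ j ∧ j / s < r then α xx else α yy) :
    IsSF ((List.range p).map f).prod (r : ℤ) ((p : ℤ) - r * s) := by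
  obtain ⟨g, hg⟩ := exists_conj_prod_shift f p hf c
  rw [prod_range_spaced (fun j => f (j + c)) (α xx) (α yy) p s r hs hr hrp h] at hg
  obtain ⟨β, hx, hy⟩ := exists_aut_mul_pow (s - 1)
  convert isSF_map_aut ((β.trans α).trans (MulAut.conj g)) (r : ℤ) ((p : ℤ) - r * s) using 1
  rw [hg]
  rw [MulEquiv.trans_apply, MulAut.conj_apply, MulEquiv.trans_apply]
  simp only [map_mul, map_zpow, map_pow, hx, hy]

/-- Let `s = q̂⁻¹` be the smallest positive integer with `s q ≡ ±1 (mod p)`.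
For `1 ≤ r ≤ ⌈p/s⌉` with `p ≠ r s`, both `w_{p,q,r,1}` and `w_{p,q,p-r,1}`
are `(r, p - r s)` Seifert-fibered. -/
theorem stmt8 (p q s r : ℕ) (hpq : Nat.Coprime p q)
    (hq1 : 1 ≤ q) (hq2 : 2 * q < p)
    (hs1 : 0 < s)
    (hs2 : (s * q : ℤ) ≡ 1 [ZMOD (p : ℤ)] ∨ (s * q : ℤ) ≡ -1 [ZMOD (p : ℤ)])
    (hs3 : ∀ t : ℕ, 0 < t →
      ((t * q : ℤ) ≡ 1 [ZMOD (p : ℤ)] ∨ (t * q : ℤ) ≡ -1 [ZMOD (p : ℤ)]) → s ≤ t)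
    (hr1 : 1 ≤ r) (hr2 : (r : ℤ) ≤ ⌈(p : ℚ) / (s : ℚ)⌉) (hrs : p ≠ r * s) :
    IsSF (w p q r 1) (r : ℤ) ((p : ℤ) - r * s) ∧
    IsSF (w p q (p - r) 1) (r : ℤ) ((p : ℤ) - r * s) := by
  have hrp : (r - 1) * s < p := by
    have h := Int.le_ceil_iff.1 hr2
    rw [lt_div_iff₀ (by exact_mod_cast hs1)] at h
    obtain ⟨k, rfl⟩ : ∃ k, r = k + 1 := ⟨r - 1, by omega⟩
    push_cast at h
    rw [add_sub_cancel_right] at h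
    exact_mod_cast h
  have hrlt : r < p := by
    by_contra hle
    rcases Nat.lt_or_ge s 2 with h | h
    · obtain rfl : s = 1 := by omega
      omega
    · have := Nat.mul_le_mul (show p - 1 ≤ r - 1 by omega) h
      omega
  have hper (j : ℕ) : (j + p) * q % p = j * q % p := by
    rw [add_mul, Nat.add_mul_mod_self_left]
  constructor
  · obtain ⟨c, hc⟩ := exists_shift_mem_iff p q s r 0 hpq hs1 hs2 hr1 hrp (by omega)
    obtain ⟨α, hx, hy⟩ := exists_aut_mul_pow 1
    refine isSF_prod_range α _ p s r c hs1 hr1 hrp (fun j => by simp only [hper]) fun j hj => ?_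
    simp only [← hc j hj, hx, hy, Nat.mod_eq_of_lt hrlt, Nat.div_eq_of_lt hrlt, zero_add,
      Nat.zero_le, true_and]
    split_ifs <;> simp
  · have hlt : p - r < p := by omega
    obtain ⟨c, hc⟩ := exists_shift_mem_iff p q s r (p - r) hpq hs1 hs2 hr1 hrp (by omega)
    obtain ⟨α, hx, hy⟩ := exists_aut_yy_mul
    refine isSF_prod_range α _ p s r c hs1 hr1 hrp (fun j => by simp only [hper]) fun j hj => ?_
    have hmod : (j + c) * q % p < p := Nat.mod_lt _ (by omega)
    simp only [← hc j hj, hx, hy, Nat.mod_eq_of_lt hlt, Nat.div_eq_of_lt hlt, zero_add]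
    split_ifs <;> first | omega | simp
end

section
/- For every integer n, there is an automorphism of the free group F on x and y mapping x^{2n+1} y x^{−n} y x^{−n} y to x^{3n+1} y^3; consequently the one-relator group ⟨x, y | x^{2n+1} y x^{−n} y x^{−n} y⟩ (the quotient of F by the normal closure of x^{2n+1} y x^{−n} y x^{−n} y) is isomorphic to G_{3, 3n+1}. (This says the slope-3 embedding of the twist knot K_n is (3, 3n+1) Seifert-fibered with respect to the outside handlebody.) -/
/-- The automorphism of the free group fixing `x` and sending `y` to `x ^ n * y`. -/
def shearEquiv (n : ℤ) : FreeGroup (Fin 2) ≃* FreeGroup (Fin 2) :=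
  MonoidHom.toMulEquiv (FreeGroup.lift ![xx, xx ^ n * yy]) (FreeGroup.lift ![xx, xx ^ (-n) * yy])
    (by ext i; fin_cases i <;> simp [xx, yy])
    (by ext i; fin_cases i <;> simp [xx, yy])

lemma shearEquiv_xx (n : ℤ) : shearEquiv n xx = xx := by
  simp [shearEquiv, xx]

lemma shearEquiv_yy (n : ℤ) : shearEquiv n yy = xx ^ n * yy := by
  simp [shearEquiv, yy]

/-- The automorphism of the free group exchanging `x` and `y`. -/
def swapEquiv : FreeGroup (Fin 2) ≃* FreeGroup (Fin 2) :=
  FreeGroup.freeGroupCongr (Equiv.swap 0 1)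

lemma swapEquiv_xx : swapEquiv xx = yy := by
  simp [swapEquiv, xx, yy]

lemma swapEquiv_yy : swapEquiv yy = xx := by
  simp [swapEquiv, xx, yy]

lemma shearEquiv_relator (n : ℤ) :
    shearEquiv n (xx ^ (2 * n + 1) * yy * xx ^ (-n) * yy * xx ^ (-n) * yy) =
      xx ^ (3 * n + 1) * yy ^ (3 : ℤ) := by
  simp only [map_mul, map_zpow, shearEquiv_xx, shearEquiv_yy]
  rw [show (3 : ℤ) = 1 + 1 + 1 by rfl, zpow_add yy, zpow_add yy, zpow_one]
  group

lemma conj_swapEquiv_zpow_mul_zpow (a b : ℤ) :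
    MulAut.conj (xx ^ a) (swapEquiv (xx ^ b * yy ^ a)) = xx ^ a * yy ^ b := by
  rw [MulAut.conj_apply, map_mul, map_zpow, map_zpow, swapEquiv_xx, swapEquiv_yy]
  group

/-- An automorphism carrying `g` to `x ^ a * y ^ b` shows that `g` is `(a, b)` Seifert-fibered. -/
lemma IsSF.of_mulEquiv {g : FreeGroup (Fin 2)} {a b : ℤ}
    (φ : FreeGroup (Fin 2) ≃* FreeGroup (Fin 2)) (h : φ g = xx ^ a * yy ^ b) : IsSF g a b := by
  refine ⟨QuotientGroup.congr _ _ φ ?_⟩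
  rw [← h, ← Set.image_singleton]
  exact Subgroup.map_normalClosure {g} φ.toMonoidHom φ.surjective

/-- For every integer `n`, some automorphism of the free group maps
`x^{2n+1} y x^{-n} y x^{-n} y` to `x^{3n+1} y^3`; consequently
`⟨x, y | x^{2n+1} y x^{-n} y x^{-n} y⟩ ≅ G_{3, 3n+1}` (the slope-3 embedding of
the twist knot `K_n` is `(3, 3n+1)` Seifert-fibered w.r.t. the outside
handlebody). -/
theorem stmt14 (n : ℤ) :
    (∃ φ : FreeGroup (Fin 2) ≃* FreeGroup (Fin 2),
      φ (xx ^ (2 * n + 1) * yy * xx ^ (-n) * yy * xx ^ (-n) * yy) =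
        xx ^ (3 * n + 1) * yy ^ (3 : ℤ)) ∧
    IsSF (xx ^ (2 * n + 1) * yy * xx ^ (-n) * yy * xx ^ (-n) * yy) 3 (3 * n + 1) := by
  refine ⟨⟨shearEquiv n, shearEquiv_relator n⟩, ?_⟩
  refine IsSF.of_mulEquiv ((shearEquiv n).trans (swapEquiv.trans (MulAut.conj (xx ^ (3 : ℤ))))) ?_
  rw [MulEquiv.trans_apply, shearEquiv_relator, MulEquiv.trans_apply, conj_swapEquiv_zpow_mul_zpow]
end
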